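/- Let S ∈ ℝ^{d×d} be symmetric positive definite. Then the function g(Σ) = −log det Σ − trace(Σ⁻¹ S), defined on symmetric positive definite d×d matrices Σ, attains its maximum uniquely at Σ = S. -/

import Mathlib

/-!
If `A` and `B` are positive definite and `A = Uᴴ U`, then `A * B` is similar to the positive
definite matrix `U B Uᴴ`. Applying `log x ≤ x - 1` to each eigenvalue gives
`log det (A * B) ≤ trace (A * B) - n`, with equality exactly when all eigenvalues are `1`, that is,
when `A * B = 1`. For `A = T⁻¹` and `B = S`, the gap in this inequality is `g(S) - g(T)`.
-/

open Matrix Real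

section

open scoped ComplexOrder

variable {n 𝕜 R : Type*} [Fintype n] [DecidableEq n] [RCLike 𝕜] [CommRing R]

lemma log_eq_sub_one_iff_of_pos {x : ℝ} (hx : 0 < x) : log x = x - 1 ↔ x = 1 := by
  refine ⟨fun h => ?_, fun h => by simp [h]⟩
  by_contra hne
  exact (log_lt_sub_one_of_pos hx hne).ne h

lemma det_eq_of_isConj {A B : Matrix n n R} (h : IsConj A B) : A.det = B.det :=
  isConj_iff_eq.mp (detMonoidHom.map_isConj h)

lemma trace_eq_of_isConj {A B : Matrix n n R} (h : IsConj A B) : A.trace = B.trace := by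
  obtain ⟨U, hU⟩ := h
  rw [← trace_units_conj U A, hU.eq, Units.mul_inv_cancel_right]

lemma eq_smul_one_of_eigenvalues_eq {A : Matrix n n 𝕜} (hA : A.IsHermitian) {c : ℝ}
    (h : ∀ i, hA.eigenvalues i = c) : A = (c : 𝕜) • 1 := by
  have hdiag : diagonal (RCLike.ofReal ∘ hA.eigenvalues) = (c : 𝕜) • (1 : Matrix n n 𝕜) := by
    rw [smul_one_eq_diagonal]
    simp only [Function.comp_def, h]
  rw [hA.spectral_theorem, hdiag, map_smul, map_one]

lemma log_re_det_eq_sum_log_eigenvalues {A : Matrix n n 𝕜} (hA : A.PosDef) :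
    log (RCLike.re A.det) = ∑ i, log (hA.1.eigenvalues i) := by
  rw [hA.1.det_eq_prod_eigenvalues, ← RCLike.ofReal_prod, RCLike.ofReal_re,
    log_prod fun i _ => (hA.eigenvalues_pos i).ne']

lemma re_trace_sub_card_eq_sum_eigenvalues_sub_one {A : Matrix n n 𝕜} (hA : A.IsHermitian) :
    RCLike.re A.trace - Fintype.card n = ∑ i, (hA.eigenvalues i - 1) := by
  simp [hA.trace_eq_sum_eigenvalues]

theorem log_re_det_le_re_trace_sub_card {A : Matrix n n 𝕜} (hA : A.PosDef) :
    log (RCLike.re A.det) ≤ RCLike.re A.trace - Fintype.card n := by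
  rw [log_re_det_eq_sum_log_eigenvalues hA, re_trace_sub_card_eq_sum_eigenvalues_sub_one hA.1]
  exact Finset.sum_le_sum fun i _ => log_le_sub_one_of_pos (hA.eigenvalues_pos i)

theorem log_re_det_eq_re_trace_sub_card_iff {A : Matrix n n 𝕜} (hA : A.PosDef) :
    log (RCLike.re A.det) = RCLike.re A.trace - Fintype.card n ↔ A = 1 := by
  refine ⟨fun h => ?_, fun h => by simp [h]⟩
  rw [log_re_det_eq_sum_log_eigenvalues hA, re_trace_sub_card_eq_sum_eigenvalues_sub_one hA.1,
    Finset.sum_eq_sum_iff_of_le fun i _ => log_le_sub_one_of_pos (hA.eigenvalues_pos i)] at h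
  have heig (i : n) : hA.1.eigenvalues i = 1 :=
    (log_eq_sub_one_iff_of_pos (hA.eigenvalues_pos i)).mp (h i (Finset.mem_univ i))
  simpa using eq_smul_one_of_eigenvalues_eq hA.1 heig

open scoped MatrixOrder in
lemma exists_posDef_isConj_mul {A B : Matrix n n 𝕜} (hA : A.PosDef) (hB : B.PosDef) :
    ∃ M : Matrix n n 𝕜, M.PosDef ∧ IsConj M (A * B) := by
  obtain ⟨U, hU, rfl⟩ :=
    CStarAlgebra.isStrictlyPositive_iff_eq_star_mul_self.mp hA.isStrictlyPositive
  refine ⟨U * B * star U, hU.posDef_star_right_conjugate_iff.mpr hB, hU.star.unit, ?_⟩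
  simp only [SemiconjBy, IsUnit.unit_spec, mul_assoc]

theorem log_re_det_mul_le_re_trace_mul_sub_card {A B : Matrix n n 𝕜} (hA : A.PosDef)
    (hB : B.PosDef) :
    log (RCLike.re (A * B).det) ≤ RCLike.re (A * B).trace - Fintype.card n := by
  obtain ⟨M, hM, hconj⟩ := exists_posDef_isConj_mul hA hB
  rw [← det_eq_of_isConj hconj, ← trace_eq_of_isConj hconj]
  exact log_re_det_le_re_trace_sub_card hM

theorem log_re_det_mul_eq_re_trace_mul_sub_card_iff {A B : Matrix n n 𝕜} (hA : A.PosDef)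
    (hB : B.PosDef) :
    log (RCLike.re (A * B).det) = RCLike.re (A * B).trace - Fintype.card n ↔ A * B = 1 := by
  obtain ⟨M, hM, hconj⟩ := exists_posDef_isConj_mul hA hB
  rw [← det_eq_of_isConj hconj, ← trace_eq_of_isConj hconj, log_re_det_eq_re_trace_sub_card_iff hM]
  constructor
  · rintro rfl
    exact isConj_one_right.mp hconj
  · intro h
    exact isConj_one_left.mp (h ▸ hconj)

lemma log_re_det_inv_mul {S T : Matrix n n 𝕜} (hS : S.PosDef) (hT : T.PosDef) :
    log (RCLike.re (T⁻¹ * S).det) = log (RCLike.re S.det) - log (RCLike.re T.det) := by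
  obtain ⟨s, hs, hsdet⟩ := RCLike.pos_iff_exists_ofReal.mp hS.det_pos
  obtain ⟨t, ht, htdet⟩ := RCLike.pos_iff_exists_ofReal.mp hT.det_pos
  rw [det_mul, det_nonsing_inv, Ring.inverse_eq_inv', ← hsdet, ← htdet, ← RCLike.ofReal_inv,
    ← RCLike.ofReal_mul, RCLike.ofReal_re, RCLike.ofReal_re, RCLike.ofReal_re,
    log_mul (inv_ne_zero ht.ne') hs.ne', log_inv]
  ring

/-- The function `g(T) = -log det T - trace (T⁻¹ S)` of the covariance `T`, which is the Gaussian
log-likelihood of data with empirical covariance `S`, up to scaling and an additive constant. Real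
parts are taken so that complex Hermitian covariances are covered; `det T` and `trace (T⁻¹ S)` are
real when `S` and `T` are positive definite. -/
noncomputable def covarianceLogLikelihood (S T : Matrix n n 𝕜) : ℝ :=
  -log (RCLike.re T.det) - RCLike.re (T⁻¹ * S).trace

lemma covarianceLogLikelihood_self_sub {S T : Matrix n n 𝕜} (hS : S.PosDef) (hT : T.PosDef) :
    covarianceLogLikelihood S S - covarianceLogLikelihood S T =
      RCLike.re (T⁻¹ * S).trace - Fintype.card n - log (RCLike.re (T⁻¹ * S).det) := by
  have hSS : RCLike.re (S⁻¹ * S).trace = Fintype.card n := by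
    rw [nonsing_inv_mul S ((isUnit_iff_isUnit_det S).mp hS.isUnit), trace_one, RCLike.natCast_re]
  rw [covarianceLogLikelihood, covarianceLogLikelihood, hSS, log_re_det_inv_mul hS hT]
  ring

theorem gaussian_mle_covariance_general {S : Matrix n n 𝕜} (hS : S.PosDef) :
    (∀ T : Matrix n n 𝕜, T.PosDef →
      covarianceLogLikelihood S T ≤ covarianceLogLikelihood S S) ∧
    (∀ T : Matrix n n 𝕜, T.PosDef →
      covarianceLogLikelihood S T = covarianceLogLikelihood S S → T = S) := by
  refine ⟨fun T hT => ?_, fun T hT h => ?_⟩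
  · have hgap := covarianceLogLikelihood_self_sub hS hT
    linarith [log_re_det_mul_le_re_trace_mul_sub_card hT.inv hS]
  · have hgap := covarianceLogLikelihood_self_sub hS hT
    have hone : T⁻¹ * S = 1 :=
      (log_re_det_mul_eq_re_trace_mul_sub_card_iff hT.inv hS).mp (by linarith)
    rw [← mul_nonsing_inv_cancel_left T S ((isUnit_iff_isUnit_det T).mp hT.isUnit), hone, mul_one]

end

/-- For a symmetric positive definite `S`, the function
`g(Σ) = −log det Σ − trace(Σ⁻¹ S)` on symmetric positive definite matrices attains its
maximum uniquely at `Σ = S`. -/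
theorem gaussian_mle_covariance (d : ℕ) (S : Matrix (Fin d) (Fin d) ℝ)
    (hSsymm : S.IsSymm) (hSpd : S.PosDef)
    (g : Matrix (Fin d) (Fin d) ℝ → ℝ)
    (hg : ∀ T : Matrix (Fin d) (Fin d) ℝ, g T = -Real.log T.det - (T⁻¹ * S).trace) :
    (∀ T : Matrix (Fin d) (Fin d) ℝ, T.IsSymm → T.PosDef → g T ≤ g S) ∧
    (∀ T : Matrix (Fin d) (Fin d) ℝ, T.IsSymm → T.PosDef → g T = g S → T = S) := by
  obtain rfl : g = covarianceLogLikelihood S := funext hg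
  exact (gaussian_mle_covariance_general hSpd).imp (fun h T _ => h T) (fun h T _ => h T)
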